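/- arXiv:1906.06202 — 2 statements merged into one kernel-verified Lean document; each statement's English description precedes it below -/
import Mathlib

section
/- Let E : B → Ã ⊇ A be a generalised expectation for a C*-inclusion A ⊆ B, with LN_E := {b : E(b* b) = 0}, RN_E := {b : E(b b*) = 0}, N_E := {b : E((b c)*(b c)) = 0 for all c ∈ B}. Then: (1) E is symmetric if and only if LN_E = RN_E = N_E; (2) E is faithful if and only if LN_E = RN_E = N_E = {0}; (3) E is almost faithful if and only if N_E = {0}, if and only if there is no nonzero closed two-sided ideal of B contained in ker E; (4) E is faithful if and only if E is almost faithful and symmetric. -/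
/-- A square matrix over a C*-algebra is positive iff it is of the form `yᴴ * y`. -/
def MatrixIsPositive {B : Type*} [NonUnitalCStarAlgebra B] {n : ℕ}
    (M : Matrix (Fin n) (Fin n) B) : Prop :=
  ∃ y : Matrix (Fin n) (Fin n) B, M = y.conjTranspose * y

/-- A linear map between C*-algebras is completely positive if all the induced entrywise
maps between matrix algebras preserve positivity. -/
def CompletelyPositive {B C : Type*} [NonUnitalCStarAlgebra B] [NonUnitalCStarAlgebra C]
    (E : B →ₗ[ℂ] C) : Prop :=
  ∀ (n : ℕ) (M : Matrix (Fin n) (Fin n) B),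
    MatrixIsPositive M → MatrixIsPositive (M.map ⇑E)

/-- A closed (ring-theoretic) two-sided ideal of `B`. -/
def IsClosedTwoSidedIdeal {B : Type*} [NonUnitalCStarAlgebra B] (S : Set B) : Prop :=
  IsClosed S ∧ (0 : B) ∈ S ∧ (∀ x ∈ S, ∀ y ∈ S, x + y ∈ S) ∧ (∀ x ∈ S, -x ∈ S) ∧
    (∀ b : B, ∀ x ∈ S, b * x ∈ S) ∧ ∀ b : B, ∀ x ∈ S, x * b ∈ S

/-!
If `E (b* b) = 0`, then expanding `E ((a + n b)* (a + n b)) ≥ 0` for all natural `n`, and replacing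
`a` by `-a` and `i a`, shows that `E (a b) = E (b* a) = 0` for every `a`. Hence
`N_E = {b : E (x b c) = 0 for all x, c}`, and the automatic continuity of `E` together with an
approximate unit identifies `N_E` as the largest closed two-sided ideal contained in `ker E`; it is
contained in `LN_E` and `RN_E`. Since `RN_E` is a right ideal, `N_E` exhausts `RN_E` as soon as
`RN_E ⊆ LN_E`.
-/

section Definitions

variable {B C : Type*} [NonUnitalSemiring B] [Star B] [Zero C]

/-- The set `LN_E` of those `b` with `E (b* b) = 0`. -/
def leftNullSpace (E : B → C) : Set B :=
  {b | E (star b * b) = 0}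

/-- The set `RN_E` of those `b` with `E (b b*) = 0`. -/
def rightNullSpace (E : B → C) : Set B :=
  {b | E (b * star b) = 0}

/-- The set `N_E` of those `b` all of whose right multiples lie in `LN_E`. For a positive linear
map this is the largest closed two-sided ideal contained in the kernel. -/
def nullIdeal (E : B → C) : Set B :=
  {b | ∀ c, E (star (b * c) * (b * c)) = 0}

/-- Symmetry of a map: `E (b* b) = 0` implies `E (b b*) = 0`. -/
def IsSymmetricMap (E : B → C) : Prop :=
  ∀ b, E (star b * b) = 0 → E (b * star b) = 0

/-- Faithfulness of a map: `E (b* b) = 0` only for `b = 0`. -/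
def IsFaithfulMap (E : B → C) : Prop :=
  ∀ b, E (star b * b) = 0 → b = 0

/-- Almost faithfulness of a map: `E ((b c)* (b c)) = 0` for all `c` only for `b = 0`. -/
def IsAlmostFaithfulMap (E : B → C) : Prop :=
  ∀ b, (∀ c, E (star (b * c) * (b * c)) = 0) → b = 0

end Definitions

section StarOperation

variable {B C : Type*} [NonUnitalSemiring B] [StarRing B] [Zero C] {E : B → C} {b : B}

lemma star_mem_leftNullSpace_iff : star b ∈ leftNullSpace E ↔ b ∈ rightNullSpace E := by
  simp only [leftNullSpace, rightNullSpace, Set.mem_ofPred_eq, star_star]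

lemma star_mem_rightNullSpace_iff : star b ∈ rightNullSpace E ↔ b ∈ leftNullSpace E := by
  rw [← star_mem_leftNullSpace_iff, star_star]

lemma IsSymmetricMap.leftNullSpace_eq_rightNullSpace (hE : IsSymmetricMap E) :
    leftNullSpace E = rightNullSpace E :=
  Set.Subset.antisymm hE fun _ hb =>
    star_mem_rightNullSpace_iff.1 (hE _ (star_mem_leftNullSpace_iff.2 hb))

end StarOperation

lemma nonneg_of_forall_nonneg_add_nsmul {V : Type*} [AddCommGroup V] [PartialOrder V]
    [Module ℝ V] [PosSMulMono ℝ V] [TopologicalSpace V] [ContinuousAdd V] [ContinuousSMul ℝ V]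
    [ClosedIciTopology V] {p x : V} (h : ∀ n : ℕ, 0 ≤ p + n • x) : 0 ≤ x := by
  have hlim : Filter.Tendsto (fun n : ℕ => (n : ℝ)⁻¹ • p + x) Filter.atTop (nhds x) := by
    simpa only [zero_smul, zero_add] using
      ((tendsto_inv_atTop_nhds_zero_nat (𝕜 := ℝ)).smul_const p).add_const x
  refine ge_of_tendsto hlim ((Filter.eventually_ne_atTop 0).mono fun n hn => ?_)
  have hn' : (n : ℝ) ≠ 0 := Nat.cast_ne_zero.2 hn
  calc 0 ≤ (n : ℝ)⁻¹ • (p + n • x) := smul_nonneg (by positivity) (h n)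
    _ = (n : ℝ)⁻¹ • p + x := by
      rw [smul_add, ← Nat.cast_smul_eq_nsmul ℝ, inv_smul_smul₀ hn']

section CauchySchwarz

variable {B C : Type*} [NonUnitalRing B] [StarRing B] [PartialOrder B] [StarOrderedRing B]
  [Module ℂ B] [AddCommGroup C] [PartialOrder C] [Module ℂ C] [PosSMulMono ℝ C]
  [TopologicalSpace C] [ContinuousAdd C] [ContinuousSMul ℝ C] [ClosedIciTopology C]
  {E : B →ₚ[ℂ] C} {b : B}

lemma map_star_mul_add_map_star_mul_nonneg (hb : b ∈ leftNullSpace E) (a : B) :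
    0 ≤ E (star a * b) + E (star b * a) := by
  refine nonneg_of_forall_nonneg_add_nsmul (p := E (star a * a)) fun n => ?_
  calc 0 ≤ E (star (a + n • b) * (a + n • b)) := map_nonneg E (star_mul_self_nonneg _)
    _ = E (star a * a) + n • (E (star a * b) + E (star b * a)) + n • n • E (star b * b) := by
      simp only [star_add, star_nsmul, add_mul, mul_add, smul_mul_assoc, mul_smul_comm, map_add,
        map_nsmul, smul_add]
      abel
    _ = E (star a * a) + n • (E (star a * b) + E (star b * a)) := by
      rw [show E (star b * b) = 0 from hb, smul_zero, smul_zero, add_zero]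

variable [IsOrderedAddMonoid C]

lemma map_star_mul_eq_neg_map_star_mul (hb : b ∈ leftNullSpace E) (a : B) :
    E (star a * b) = -E (star b * a) := by
  refine eq_neg_of_add_eq_zero_left (le_antisymm ?_ (map_star_mul_add_map_star_mul_nonneg hb a))
  have h := map_star_mul_add_map_star_mul_nonneg hb (-a)
  rwa [star_neg, neg_mul, mul_neg, map_neg, map_neg, ← neg_add, neg_nonneg] at h

variable [StarModule ℂ B] [IsScalarTower ℂ B B] [SMulCommClass ℂ B B]

lemma map_star_mul_eq_zero_of_mem_leftNullSpace (hb : b ∈ leftNullSpace E) (a : B) :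
    E (star b * a) = 0 := by
  have h : E (star a * b) = E (star b * a) := by
    have hI := map_star_mul_eq_neg_map_star_mul hb (Complex.I • a)
    simpa [smul_mul_assoc, mul_smul_comm] using hI
  have : IsAddTorsionFree C := .of_isTorsionFree ℂ C
  exact self_eq_neg.1 (h ▸ map_star_mul_eq_neg_map_star_mul hb a)

lemma map_mul_eq_zero_of_mem_leftNullSpace (hb : b ∈ leftNullSpace E) (a : B) :
    E (a * b) = 0 := by
  simpa only [star_star, map_star_mul_eq_zero_of_mem_leftNullSpace hb, neg_zero] using
    map_star_mul_eq_neg_map_star_mul hb (star a)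

lemma mul_mem_rightNullSpace (hb : b ∈ rightNullSpace E) (c : B) : b * c ∈ rightNullSpace E := by
  have h := map_star_mul_eq_zero_of_mem_leftNullSpace (star_mem_leftNullSpace_iff.2 hb)
    (c * star (b * c))
  rwa [star_star, ← mul_assoc] at h

lemma mem_nullIdeal_iff : b ∈ nullIdeal E ↔ ∀ x c, E (x * (b * c)) = 0 :=
  ⟨fun hb x c => map_mul_eq_zero_of_mem_leftNullSpace (hb c) x, fun h _ => h _ _⟩

end CauchySchwarz

lemma eq_of_forall_map_mul_right_eq {B X : Type*} [NonUnitalCStarAlgebra B] [TopologicalSpace X]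
    [T2Space X] {F : B → X} (hF : Continuous F) {b : B} {x : X} (h : ∀ c, F (b * c) = x) :
    F b = x := by
  let _ := CStarAlgebra.spectralOrder B
  have := CStarAlgebra.spectralOrderedRing B
  have hu := CStarAlgebra.increasingApproximateUnit B
  have := hu.neBot
  have hlim := (hF.tendsto b).comp (hu.tendsto_mul_left b)
  exact tendsto_nhds_unique hlim (tendsto_const_nhds.congr fun c => (h c).symm)

lemma IsClosedTwoSidedIdeal.subset_nullIdeal {B C : Type*} [NonUnitalCStarAlgebra B] [Zero C]
    {E : B → C} {J : Set B} (hJ : IsClosedTwoSidedIdeal J) (hker : J ⊆ {b | E b = 0}) :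
    J ⊆ nullIdeal E := fun b hb c =>
  have ⟨_, _, _, _, mul_left, mul_right⟩ := hJ
  hker (mul_left _ _ (mul_right c b hb))

section PositiveMaps

variable {B C : Type*} [NonUnitalCStarAlgebra B] [PartialOrder B] [StarOrderedRing B]
  [NonUnitalCStarAlgebra C] [PartialOrder C] [StarOrderedRing C] {E : B →ₚ[ℂ] C} {b : B}

lemma map_eq_zero_of_mem_leftNullSpace (hb : b ∈ leftNullSpace E) : E b = 0 := by
  have hstar : E (star (star b)) = 0 :=
    eq_of_forall_map_mul_right_eq (F := fun a => E (star a)) (by fun_prop) fun c => by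
      rw [star_mul, star_star]
      exact map_mul_eq_zero_of_mem_leftNullSpace hb (star c)
  rwa [star_star] at hstar

lemma nullIdeal_subset_leftNullSpace : nullIdeal E ⊆ leftNullSpace E := fun _ hb =>
  eq_of_forall_map_mul_right_eq (F := fun a => E (star a * a)) (by fun_prop) hb

variable (E) in
lemma isClosedTwoSidedIdeal_nullIdeal : IsClosedTwoSidedIdeal (nullIdeal E) := by
  refine ⟨?closed, ?zero, ?add, ?neg, ?mul_left, ?mul_right⟩
  case closed =>
    simp only [nullIdeal, Set.ofPred_forall]
    exact isClosed_iInter fun c => isClosed_eq (by fun_prop) continuous_const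
  all_goals simp only [mem_nullIdeal_iff]
  case zero => simp
  case add =>
    intro a ha b hb x c
    rw [add_mul, mul_add, map_add, ha, hb, add_zero]
  case neg =>
    intro a ha x c
    rw [neg_mul, mul_neg, map_neg, ha, neg_zero]
  case mul_left =>
    intro a b hb x c
    simpa only [mul_assoc] using hb (x * a) c
  case mul_right =>
    intro a b hb x c
    simpa only [mul_assoc] using hb x (a * c)

lemma nullIdeal_subset_ker : nullIdeal E ⊆ {b | E b = 0} := fun _ hb =>
  map_eq_zero_of_mem_leftNullSpace (nullIdeal_subset_leftNullSpace hb)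

lemma nullIdeal_subset_rightNullSpace : nullIdeal E ⊆ rightNullSpace E := fun b hb =>
  have ⟨_, _, _, _, _, mul_right⟩ := isClosedTwoSidedIdeal_nullIdeal E
  nullIdeal_subset_ker (mul_right (star b) b hb)

lemma rightNullSpace_subset_nullIdeal (hE : IsSymmetricMap E) :
    rightNullSpace E ⊆ nullIdeal E := fun _ hb c =>
  hE.leftNullSpace_eq_rightNullSpace.superset (mul_mem_rightNullSpace hb c)

lemma isSymmetricMap_iff_nullSpaces_eq_nullIdeal :
    IsSymmetricMap E ↔ leftNullSpace E = rightNullSpace E ∧ rightNullSpace E = nullIdeal E :=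
  ⟨fun hE => ⟨hE.leftNullSpace_eq_rightNullSpace,
    (rightNullSpace_subset_nullIdeal hE).antisymm nullIdeal_subset_rightNullSpace⟩,
    fun h => h.1.subset⟩

lemma isAlmostFaithfulMap_iff_nullIdeal_eq_singleton :
    IsAlmostFaithfulMap E ↔ nullIdeal E = {0} :=
  ⟨fun hE => Set.eq_singleton_iff_unique_mem.2 ⟨(isClosedTwoSidedIdeal_nullIdeal E).2.1, hE⟩,
    fun h => h.subset⟩

lemma isAlmostFaithfulMap_iff_forall_ideal :
    IsAlmostFaithfulMap E ↔
      ∀ J : Set B, IsClosedTwoSidedIdeal J → J ⊆ {b | E b = 0} → J = {0} := by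
  rw [isAlmostFaithfulMap_iff_nullIdeal_eq_singleton]
  refine ⟨fun h J hJ hker => ?_, fun h =>
    h _ (isClosedTwoSidedIdeal_nullIdeal E) nullIdeal_subset_ker⟩
  exact Set.eq_singleton_iff_unique_mem.2
    ⟨hJ.2.1, fun b hb => h.subset (hJ.subset_nullIdeal hker hb)⟩

lemma isFaithfulMap_iff_isAlmostFaithfulMap_and_isSymmetricMap :
    IsFaithfulMap E ↔ IsAlmostFaithfulMap E ∧ IsSymmetricMap E := by
  refine ⟨fun hE => ⟨fun b hb => hE b (nullIdeal_subset_leftNullSpace hb), fun b hb => ?_⟩,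
    fun ⟨halmost, hsymm⟩ b hb => halmost b (rightNullSpace_subset_nullIdeal hsymm (hsymm b hb))⟩
  rw [hE b hb, zero_mul, map_zero]

lemma isFaithfulMap_iff_nullSpaces_eq_singleton :
    IsFaithfulMap E ↔
      leftNullSpace E = {0} ∧ rightNullSpace E = {0} ∧ nullIdeal E = {0} := by
  refine ⟨fun hE => ?_, fun h => h.1.subset⟩
  obtain ⟨halmost, hsymm⟩ := isFaithfulMap_iff_isAlmostFaithfulMap_and_isSymmetricMap.1 hE
  obtain ⟨hleft, hright⟩ := isSymmetricMap_iff_nullSpaces_eq_nullIdeal.1 hsymm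
  rw [hleft, hright, isAlmostFaithfulMap_iff_nullIdeal_eq_singleton.1 halmost]
  exact ⟨rfl, rfl, rfl⟩

theorem faithfulness_characterisations_general (E : B →ₚ[ℂ] C) :
    (IsSymmetricMap E ↔
      leftNullSpace E = rightNullSpace E ∧ rightNullSpace E = nullIdeal E) ∧
    (IsFaithfulMap E ↔
      leftNullSpace E = {0} ∧ rightNullSpace E = {0} ∧ nullIdeal E = {0}) ∧
    (IsAlmostFaithfulMap E ↔ nullIdeal E = {0}) ∧
    (IsAlmostFaithfulMap E ↔
      ∀ J : Set B, IsClosedTwoSidedIdeal J → J ⊆ {b | E b = 0} → J = {0}) ∧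
    (IsFaithfulMap E ↔ IsAlmostFaithfulMap E ∧ IsSymmetricMap E) :=
  ⟨isSymmetricMap_iff_nullSpaces_eq_nullIdeal, isFaithfulMap_iff_nullSpaces_eq_singleton,
    isAlmostFaithfulMap_iff_nullIdeal_eq_singleton, isAlmostFaithfulMap_iff_forall_ideal,
    isFaithfulMap_iff_isAlmostFaithfulMap_and_isSymmetricMap⟩

end PositiveMaps

section CompletelyPositiveMaps

variable {B C : Type*} [NonUnitalCStarAlgebra B] [NonUnitalCStarAlgebra C] {E : B →ₗ[ℂ] C}

lemma CompletelyPositive.exists_map_star_mul_self_eq (hE : CompletelyPositive E) (b : B) :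
    ∃ c, E (star b * b) = star c * c := by
  let y : Matrix (Fin 1) (Fin 1) B := .of fun _ _ => b
  obtain ⟨z, hz⟩ := hE 1 (y.conjTranspose * y) ⟨y, rfl⟩
  exact ⟨z 0 0, by simpa [y, Matrix.mul_apply] using congrFun₂ hz 0 0⟩

/-- A completely positive map regarded as a positive linear map, through its action on `1 × 1`
matrices. -/
def CompletelyPositive.toPositiveLinearMap [PartialOrder B] [StarOrderedRing B] [PartialOrder C]
    [StarOrderedRing C] (hE : CompletelyPositive E) : B →ₚ[ℂ] C :=
  .mk₀ E fun x hx => by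
    obtain ⟨b, rfl⟩ := CStarAlgebra.nonneg_iff_eq_star_mul_self.1 hx
    obtain ⟨c, hc⟩ := hE.exists_map_star_mul_self_eq b
    exact hc ▸ star_mul_self_nonneg c

end CompletelyPositiveMaps

attribute [local instance] CStarAlgebra.spectralOrder CStarAlgebra.spectralOrderedRing

/-- For a generalised expectation `E : B → Ã ⊇ A` with
`LN_E = {b : E(b*b) = 0}`, `RN_E = {b : E(bb*) = 0}`,
`N_E = {b : E((bc)*(bc)) = 0 for all c}`:
(1) `E` is symmetric iff `LN_E = RN_E = N_E`;
(2) `E` is faithful iff `LN_E = RN_E = N_E = {0}`;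
(3) `E` is almost faithful iff `N_E = {0}` iff no nonzero closed two-sided ideal of `B` is
contained in `ker E`;
(4) `E` is faithful iff `E` is almost faithful and symmetric. -/
theorem faithfulness_characterisations
    {A B C : Type*} [NonUnitalCStarAlgebra A] [NonUnitalCStarAlgebra B]
    [NonUnitalCStarAlgebra C] [Nontrivial A]
    (ι : A →⋆ₙₐ[ℂ] B) (κ : A →⋆ₙₐ[ℂ] C) (hι : Isometry ι) (hκ : Isometry κ)
    (E : B →ₗ[ℂ] C)
    (hcp : CompletelyPositive E)
    (hcontr : ∀ b : B, ‖E b‖ ≤ ‖b‖)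
    (hres : ∀ a : A, E (ι a) = κ a) :
    ((∀ b : B, E (star b * b) = 0 → E (b * star b) = 0) ↔
      ({b : B | E (star b * b) = 0} = {b : B | E (b * star b) = 0} ∧
        {b : B | E (b * star b) = 0} = {b : B | ∀ c : B, E (star (b * c) * (b * c)) = 0})) ∧
    ((∀ b : B, E (star b * b) = 0 → b = 0) ↔
      ({b : B | E (star b * b) = 0} = {0} ∧ {b : B | E (b * star b) = 0} = {0} ∧
        {b : B | ∀ c : B, E (star (b * c) * (b * c)) = 0} = {0})) ∧
    ((∀ b : B, (∀ c : B, E (star (b * c) * (b * c)) = 0) → b = 0) ↔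
      {b : B | ∀ c : B, E (star (b * c) * (b * c)) = 0} = {0}) ∧
    ((∀ b : B, (∀ c : B, E (star (b * c) * (b * c)) = 0) → b = 0) ↔
      (∀ J : Set B, IsClosedTwoSidedIdeal J → J ⊆ {b : B | E b = 0} → J = {0})) ∧
    ((∀ b : B, E (star b * b) = 0 → b = 0) ↔
      ((∀ b : B, (∀ c : B, E (star (b * c) * (b * c)) = 0) → b = 0) ∧
        (∀ b : B, E (star b * b) = 0 → E (b * star b) = 0))) :=
  faithfulness_characterisations_general hcp.toPositiveLinearMap
end

section
/- Let A be a C*-algebra, X a normed A-bimodule, and Y ⊆ X a closed A-subbimodule. Suppose that (i) every y ∈ Y satisfies Kishimoto's condition, and (ii) every x ∈ X satisfies Kishimoto's condition modulo Y, i.e., for every hereditary C*-subalgebra D of A and every ε > 0 there is a positive a ∈ D with ‖a‖ = 1 and inf_{y ∈ Y} ‖a · x · a − y‖ < ε. Then every x ∈ X satisfies Kishimoto's condition; that is, extensions of aperiodic normed A-bimodules are aperiodic. -/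
/-- A hereditary C*-subalgebra of `A`: a nonzero closed *-subalgebra `D` such that
`a ∈ D`, `0 ≤ b ≤ a` imply `b ∈ D`. -/
def IsHereditarySubalgebra {A : Type*} [NonUnitalCStarAlgebra A] [PartialOrder A]
    [StarOrderedRing A] (D : Set A) : Prop :=
  IsClosed D ∧ (∃ x ∈ D, x ≠ 0) ∧ (0 : A) ∈ D ∧
    (∀ x ∈ D, ∀ y ∈ D, x + y ∈ D) ∧ (∀ (c : ℂ), ∀ x ∈ D, c • x ∈ D) ∧
    (∀ x ∈ D, ∀ y ∈ D, x * y ∈ D) ∧ (∀ x ∈ D, star x ∈ D) ∧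
    ∀ a ∈ D, ∀ b : A, 0 ≤ b → b ≤ a → b ∈ D

/-- Kishimoto's condition for an element `x` of a normed `A`-bimodule `X`, whose left and
right module actions are given by the bilinear maps `L` and `R`. -/
def KishimotoCondition {A X : Type*} [NonUnitalCStarAlgebra A] [PartialOrder A]
    [StarOrderedRing A] [NormedAddCommGroup X] [NormedSpace ℂ X]
    (L R : A →ₗ[ℂ] X →ₗ[ℂ] X) (x : X) : Prop :=
  ∀ D : Set A, IsHereditarySubalgebra D → ∀ ε : ℝ, 0 < ε →
    ∃ a ∈ D, 0 ≤ a ∧ ‖a‖ = 1 ∧ ‖L a (R a x)‖ < ε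

/-! If `a ∈ D` is positive of norm one and compresses `x` close to some `y`, then functional
calculus yields `e`, close to `a`, that is a two-sided unit for some nonzero `0 ≤ g ≤ a`. The
elements of `D` for which `e` is a unit form a hereditary subalgebra, nonzero because of `g`, on
which `a` is nearly a unit. Taking there a `b` that compresses `y` to nearly zero,
`b x b ≈ (b a) x (a b) = b (a x a) b ≈ b y b ≈ 0`. -/

section Truncation

variable {A : Type*} [NonUnitalCStarAlgebra A] {a : A} {r : ℝ}

/-- The truncation `min(a, r)` of a self-adjoint element `a` at height `r`, given by functional
calculus. It is only meaningful for `0 ≤ r`: otherwise `t ↦ min t r` does not vanish at `0` and the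
non-unital functional calculus returns `0`. -/
noncomputable def truncation (r : ℝ) (a : A) : A :=
  cfcₙ (fun t : ℝ ↦ min t r) a

lemma isSelfAdjoint_truncation : IsSelfAdjoint (truncation r a) :=
  cfcₙ_predicate _ a

lemma sub_truncation (ha : IsSelfAdjoint a) (hr : 0 ≤ r) :
    a - truncation r a = cfcₙ (fun t : ℝ ↦ t - min t r) a := by
  rw [cfcₙ_sub (fun t : ℝ ↦ t) (fun t ↦ min t r) a (by fun_prop) rfl (by fun_prop)
    (min_eq_left hr), cfcₙ_id' ℝ a, truncation]

lemma truncation_mul_sub_truncation (ha : IsSelfAdjoint a) (hr : 0 ≤ r) :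
    truncation r a * (a - truncation r a) = r • (a - truncation r a) := by
  have hmin (t : ℝ) : min t r * (t - min t r) = r • (t - min t r) := by
    rcases le_total t r with h | h <;> simp [h]
  have h₀ : (0 : ℝ) - min 0 r = 0 := by simp [hr]
  rw [sub_truncation ha hr, truncation,
    ← cfcₙ_mul (fun t ↦ min t r) (fun t ↦ t - min t r) a (by fun_prop) (min_eq_left hr)
      (by fun_prop) h₀,
    ← cfcₙ_smul r (fun t : ℝ ↦ t - min t r) a (by fun_prop) h₀]
  simp only [hmin]

lemma norm_sub_truncation_le (ha : IsSelfAdjoint a) (hr : 0 ≤ r) (hra : r ≤ ‖a‖) :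
    ‖a - truncation r a‖ ≤ ‖a‖ - r := by
  rw [sub_truncation ha hr]
  refine norm_cfcₙ_le fun t ht ↦ ?_
  have hta : t ≤ ‖a‖ := by
    have h := norm_apply_le_norm_cfcₙ (id : ℝ → ℝ) a ht
    rw [cfcₙ_id ℝ a] at h
    exact (Real.le_norm_self t).trans h
  rw [Real.norm_of_nonneg (sub_nonneg.mpr (min_le_left t r)), sub_le_comm, le_min_iff]
  constructor <;> linarith

variable [PartialOrder A] [StarOrderedRing A]

lemma truncation_le (ha : IsSelfAdjoint a) (hr : 0 ≤ r) : truncation r a ≤ a := by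
  rw [← sub_nonneg, sub_truncation ha hr]
  exact cfcₙ_nonneg fun t _ ↦ sub_nonneg.mpr (min_le_left t r)

lemma truncation_nonneg (ha : 0 ≤ a) (hr : 0 ≤ r) : 0 ≤ truncation r a :=
  cfcₙ_nonneg fun t ht ↦ le_min (quasispectrum_nonneg_of_nonneg a ha t ht) hr

lemma norm_truncation_le (ha : 0 ≤ a) (hr : 0 ≤ r) : ‖truncation r a‖ ≤ r :=
  norm_cfcₙ_le fun t ht ↦ by
    rw [Real.norm_of_nonneg (le_min (quasispectrum_nonneg_of_nonneg a ha t ht) hr)]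
    exact min_le_right t r

lemma sub_truncation_ne_zero (ha : 0 ≤ a) (hr : 0 ≤ r) (hra : r < ‖a‖) :
    a - truncation r a ≠ 0 := fun h ↦
  hra.not_ge ((congrArg norm (sub_eq_zero.mp h)).trans_le (norm_truncation_le ha hr))

end Truncation

lemma mul_eq_right_iff_mul_eq_left_of_isSelfAdjoint {S : Type*} [Mul S] [StarMul S] {e b : S}
    (he : IsSelfAdjoint e) (hb : IsSelfAdjoint b) : e * b = b ↔ b * e = b := by
  rw [← star_inj, star_mul, he.star_eq, hb.star_eq]

section CStarAlgebra

variable {A : Type*} [NonUnitalCStarAlgebra A] [PartialOrder A] [StarOrderedRing A]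

lemma mul_eq_zero_of_nonneg_of_le {b c x : A} (hc : 0 ≤ c) (hcb : c ≤ b) (hbx : b * x = 0) :
    c * x = 0 := by
  obtain ⟨s, rfl⟩ := CStarAlgebra.nonneg_iff_eq_star_mul_self.mp hc
  have hle : star x * (star s * s) * x ≤ 0 := by
    simpa only [mul_assoc, hbx, mul_zero] using star_left_conjugate_le_conjugate hcb x
  have hsx : star (s * x) * (s * x) = 0 :=
    le_antisymm (by simpa only [star_mul, mul_assoc] using hle) (star_mul_self_nonneg _)
  rw [mul_assoc, CStarRing.star_mul_self_eq_zero_iff _ |>.mp hsx, mul_zero]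

lemma mul_eq_left_of_nonneg_of_le {b c e : A} (hc : 0 ≤ c) (hcb : c ≤ b) (hbe : b * e = b) :
    c * e = c := by
  -- `z - e * z` stands in for `(1 - e) * z`, as `A` need not be unital.
  have h (z : A) : (c - c * e) * z = 0 := by
    have hbz : b * (z - e * z) = 0 := by rw [mul_sub, ← mul_assoc, hbe, sub_self]
    simpa only [mul_sub, sub_mul, mul_assoc] using mul_eq_zero_of_nonneg_of_le hc hcb hbz
  exact (sub_eq_zero.mp (CStarRing.mul_star_self_eq_zero_iff _ |>.mp (h _))).symm

/-- The elements of `D` for which `e` is a two-sided unit; for a projection `e` in an algebra `A`,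
this is `D ∩ eAe`. -/
def unitCorner {S : Type*} [Mul S] (D : Set S) (e : S) : Set S :=
  {b ∈ D | e * b = b ∧ b * e = b}

lemma isHereditarySubalgebra_unitCorner {D : Set A} (hD : IsHereditarySubalgebra D) {e g : A}
    (he : IsSelfAdjoint e) (hg : g ∈ unitCorner D e) (hg₀ : g ≠ 0) :
    IsHereditarySubalgebra (unitCorner D e) := by
  obtain ⟨hclosed, -, hzero, hadd, hsmul, hmul, hstar, hher⟩ := hD
  refine ⟨?_, ⟨g, hg, hg₀⟩, ⟨hzero, mul_zero e, zero_mul e⟩, ?_, ?_, ?_, ?_, ?_⟩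
  · exact hclosed.inter ((isClosed_eq (by fun_prop) continuous_id).inter
      (isClosed_eq (by fun_prop) continuous_id))
  · rintro x ⟨hx, hex, hxe⟩ y ⟨hy, hey, hye⟩
    exact ⟨hadd x hx y hy, by rw [mul_add, hex, hey], by rw [add_mul, hxe, hye]⟩
  · rintro c x ⟨hx, hex, hxe⟩
    exact ⟨hsmul c x hx, by rw [mul_smul_comm, hex], by rw [smul_mul_assoc, hxe]⟩
  · rintro x ⟨hx, hex, -⟩ y ⟨hy, -, hye⟩
    exact ⟨hmul x hx y hy, by rw [← mul_assoc, hex], by rw [mul_assoc, hye]⟩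
  · rintro x ⟨hx, hex, hxe⟩
    exact ⟨hstar x hx, by simpa only [star_mul, he.star_eq] using congrArg star hxe,
      by simpa only [star_mul, he.star_eq] using congrArg star hex⟩
  · rintro b ⟨hb, -, hbe⟩ c hc hcb
    have hce : c * e = c := mul_eq_left_of_nonneg_of_le hc hcb hbe
    exact ⟨hher b hb c hc hcb,
      (mul_eq_right_iff_mul_eq_left_of_isSelfAdjoint he (.of_nonneg hc)).mpr hce, hce⟩

lemma norm_sub_mul_le_of_mem_unitCorner {S : Type*} [NonUnitalSeminormedRing S] {D : Set S}
    {a b e : S} (hb : b ∈ unitCorner D e) :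
    ‖b - b * a‖ ≤ ‖b‖ * ‖e - a‖ ∧ ‖b - a * b‖ ≤ ‖e - a‖ * ‖b‖ := by
  obtain ⟨-, heb, hbe⟩ := hb
  constructor
  · calc ‖b - b * a‖ = ‖b * (e - a)‖ := by rw [mul_sub, hbe]
      _ ≤ ‖b‖ * ‖e - a‖ := norm_mul_le _ _
  · calc ‖b - a * b‖ = ‖(e - a) * b‖ := by rw [sub_mul, heb]
      _ ≤ ‖e - a‖ * ‖b‖ := norm_mul_le _ _

lemma norm_inv_smul_truncation_sub_le {a : A} (ha : 0 ≤ a) {r : ℝ} (hr : 0 < r) (hr₁ : r ≤ 1)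
    (hra : r ≤ ‖a‖) : ‖r⁻¹ • truncation r a - a‖ ≤ (1 - r) + (‖a‖ - r) := by
  have hscale : ‖(r⁻¹ - 1) • truncation r a‖ ≤ 1 - r := by
    have hr_inv : 0 ≤ r⁻¹ - 1 := sub_nonneg.mpr ((one_le_inv₀ hr).mpr hr₁)
    calc ‖(r⁻¹ - 1) • truncation r a‖ = (r⁻¹ - 1) * ‖truncation r a‖ := by
          rw [norm_smul, Real.norm_of_nonneg hr_inv]
      _ ≤ (r⁻¹ - 1) * r := by gcongr; exact norm_truncation_le ha hr.le
      _ = 1 - r := by rw [sub_mul, inv_mul_cancel₀ hr.ne', one_mul]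
  calc ‖r⁻¹ • truncation r a - a‖
      = ‖(r⁻¹ - 1) • truncation r a - (a - truncation r a)‖ := by
        rw [sub_smul, one_smul, sub_sub_sub_cancel_right]
    _ ≤ ‖(r⁻¹ - 1) • truncation r a‖ + ‖a - truncation r a‖ := norm_sub_le _ _
    _ ≤ (1 - r) + (‖a‖ - r) := add_le_add hscale (norm_sub_truncation_le (.of_nonneg ha) hr.le hra)

lemma IsHereditarySubalgebra.sub_truncation_mem_unitCorner {D : Set A}
    (hD : IsHereditarySubalgebra D) {a : A} (haD : a ∈ D) (ha : 0 ≤ a) {r : ℝ} (hr : 0 < r) :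
    a - truncation r a ∈ unitCorner D (r⁻¹ • truncation r a) := by
  have ha_sa : IsSelfAdjoint a := .of_nonneg ha
  obtain ⟨-, -, -, -, -, -, -, hher⟩ := hD
  have hunit : (r⁻¹ • truncation r a) * (a - truncation r a) = a - truncation r a := by
    rw [smul_mul_assoc, truncation_mul_sub_truncation ha_sa hr.le, inv_smul_smul₀ hr.ne']
  exact ⟨hher a haD _ (sub_nonneg.mpr (truncation_le ha_sa hr.le))
      (sub_le_self a (truncation_nonneg ha hr.le)), hunit,
    (mul_eq_right_iff_mul_eq_left_of_isSelfAdjoint (.smul (.all _) isSelfAdjoint_truncation)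
      (ha_sa.sub isSelfAdjoint_truncation)).mp hunit⟩

lemma IsHereditarySubalgebra.exists_subset_norm_sub_mul_le {D : Set A}
    (hD : IsHereditarySubalgebra D) {a : A} (haD : a ∈ D) (ha : 0 ≤ a) (hnorm : ‖a‖ = 1) {δ : ℝ}
    (hδ : 0 < δ) : ∃ D' ⊆ D, IsHereditarySubalgebra D' ∧
      ∀ b ∈ D', ‖b - b * a‖ ≤ ‖b‖ * δ ∧ ‖b - a * b‖ ≤ δ * ‖b‖ := by
  obtain ⟨r, hr, hr₁⟩ : ∃ r, max 0 (1 - δ / 2) < r ∧ r < 1 :=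
    exists_between (max_lt one_pos (by linarith))
  obtain ⟨hr₀, hrδ⟩ := max_lt_iff.mp hr
  set e : A := r⁻¹ • truncation r a
  have hea : ‖e - a‖ ≤ δ :=
    (norm_inv_smul_truncation_sub_le ha hr₀ hr₁.le (hnorm ▸ hr₁.le)).trans (by linarith)
  refine ⟨unitCorner D e, fun b hb ↦ hb.1,
    isHereditarySubalgebra_unitCorner hD (.smul (.all _) isSelfAdjoint_truncation)
      (hD.sub_truncation_mem_unitCorner haD ha hr₀)
      (sub_truncation_ne_zero ha hr₀.le (hnorm ▸ hr₁)), fun b hb ↦ ?_⟩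
  obtain ⟨hba, hab⟩ := norm_sub_mul_le_of_mem_unitCorner (a := a) hb
  exact ⟨hba.trans (by gcongr), hab.trans (by gcongr)⟩

end CStarAlgebra

/-- The maps `L` and `R` are the left and right actions of a normed `A`-bimodule structure on `X`.
The right action is written with the scalar first: `R a x` stands for `x · a`. -/
structure IsNormedBimodule {𝕜 A X : Type*} [CommSemiring 𝕜] [NonUnitalSeminormedRing A]
    [Module 𝕜 A] [SeminormedAddCommGroup X] [Module 𝕜 X] (L R : A →ₗ[𝕜] X →ₗ[𝕜] X) : Prop where
  mul_left (a b : A) (x : X) : L (a * b) x = L a (L b x)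
  mul_right (a b : A) (x : X) : R (a * b) x = R b (R a x)
  left_right_comm (a b : A) (x : X) : L a (R b x) = R b (L a x)
  norm_left_le (a : A) (x : X) : ‖L a x‖ ≤ ‖a‖ * ‖x‖
  norm_right_le (a : A) (x : X) : ‖R a x‖ ≤ ‖x‖ * ‖a‖

namespace IsNormedBimodule

variable {𝕜 A X : Type*} [CommSemiring 𝕜] [NonUnitalSeminormedRing A] [Module 𝕜 A]
  [SeminormedAddCommGroup X] [Module 𝕜 X] {L R : A →ₗ[𝕜] X →ₗ[𝕜] X}

lemma norm_left_right_le (h : IsNormedBimodule L R) (a b : A) (x : X) :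
    ‖L a (R b x)‖ ≤ ‖a‖ * (‖x‖ * ‖b‖) :=
  (h.norm_left_le a _).trans (by gcongr; exact h.norm_right_le b x)

lemma norm_compression_le (h : IsNormedBimodule L R) {b : A} (hb : ‖b‖ ≤ 1) (x : X) :
    ‖L b (R b x)‖ ≤ ‖x‖ :=
  calc ‖L b (R b x)‖ ≤ ‖b‖ * (‖x‖ * ‖b‖) := h.norm_left_right_le b b x
    _ ≤ 1 * (‖x‖ * 1) := by gcongr
    _ = ‖x‖ := by rw [one_mul, mul_one]

lemma norm_compression_sub_compression_le (h : IsNormedBimodule L R) {a b : A} (ha : ‖a‖ ≤ 1)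
    (hb : ‖b‖ ≤ 1) (x : X) :
    ‖L b (R b x) - L b (R b (L a (R a x)))‖ ≤ (‖b - b * a‖ + ‖b - a * b‖) * ‖x‖ := by
  have hdecomp : L b (R b x) - L b (R b (L a (R a x))) =
      L (b - b * a) (R b x) + L (b * a) (R (b - a * b) x) := by
    simp only [map_sub, LinearMap.sub_apply, h.mul_left, h.mul_right, h.left_right_comm a b]
    abel
  have hba : ‖b * a‖ ≤ 1 := (norm_mul_le b a).trans (mul_le_one₀ hb (norm_nonneg a) ha)
  calc ‖L b (R b x) - L b (R b (L a (R a x)))‖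
      ≤ ‖L (b - b * a) (R b x)‖ + ‖L (b * a) (R (b - a * b) x)‖ := hdecomp ▸ norm_add_le _ _
    _ ≤ ‖b - b * a‖ * (‖x‖ * ‖b‖) + ‖b * a‖ * (‖x‖ * ‖b - a * b‖) :=
      add_le_add (h.norm_left_right_le _ _ x) (h.norm_left_right_le _ _ x)
    _ ≤ ‖b - b * a‖ * (‖x‖ * 1) + 1 * (‖x‖ * ‖b - a * b‖) := by gcongr
    _ = (‖b - b * a‖ + ‖b - a * b‖) * ‖x‖ := by ring

end IsNormedBimodule

theorem kishimoto_extension_general {A X : Type*} [NonUnitalCStarAlgebra A] [PartialOrder A]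
    [StarOrderedRing A] [NormedAddCommGroup X] [NormedSpace ℂ X] {L R : A →ₗ[ℂ] X →ₗ[ℂ] X}
    (h : IsNormedBimodule L R) {x : X}
    (hx : ∀ D : Set A, IsHereditarySubalgebra D → ∀ ε : ℝ, 0 < ε →
      ∃ a ∈ D, 0 ≤ a ∧ ‖a‖ = 1 ∧ ∃ y, KishimotoCondition L R y ∧ ‖L a (R a x) - y‖ < ε) :
    KishimotoCondition L R x := by
  intro D hD ε hε
  have hε₄ : 0 < ε / 4 := by positivity
  obtain ⟨δ, hδ, hδx⟩ := exists_pos_mul_lt hε₄ ‖x‖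
  obtain ⟨a, haD, ha, ha_norm, y, hy, hay⟩ := hx D hD (ε / 4) hε₄
  obtain ⟨D', hD'D, hD', hunit⟩ := hD.exists_subset_norm_sub_mul_le haD ha ha_norm hδ
  obtain ⟨b, hbD', hb, hb_norm, hby⟩ := hy D' hD' (ε / 4) hε₄
  obtain ⟨hba, hab⟩ := hunit b hbD'
  rw [hb_norm, one_mul] at hba
  rw [hb_norm, mul_one] at hab
  refine ⟨b, hD'D hbD', hb, hb_norm, ?_⟩
  set z := L a (R a x)
  have hxz : ‖L b (R b x) - L b (R b z)‖ ≤ (δ + δ) * ‖x‖ :=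
    (h.norm_compression_sub_compression_le ha_norm.le hb_norm.le x).trans (by gcongr)
  have hzy : ‖L b (R b z) - L b (R b y)‖ ≤ ‖z - y‖ := by
    simpa only [map_sub] using h.norm_compression_le hb_norm.le (z - y)
  calc ‖L b (R b x)‖
      = ‖(L b (R b x) - L b (R b z)) + (L b (R b z) - L b (R b y)) + L b (R b y)‖ := by
        rw [sub_add_sub_cancel, sub_add_cancel]
    _ ≤ ‖L b (R b x) - L b (R b z)‖ + ‖L b (R b z) - L b (R b y)‖ + ‖L b (R b y)‖ :=
      norm_add₃_le
    _ < ε := by linarith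

/-- Extensions of aperiodic normed `A`-bimodules are aperiodic: if
`Y ⊆ X` is a closed subbimodule all of whose elements satisfy Kishimoto's condition, and
every `x ∈ X` satisfies Kishimoto's condition modulo `Y`, then every `x ∈ X` satisfies
Kishimoto's condition. -/
theorem kishimoto_extension
    {A X : Type*} [NonUnitalCStarAlgebra A] [PartialOrder A] [StarOrderedRing A]
    [NormedAddCommGroup X] [NormedSpace ℂ X]
    (L R : A →ₗ[ℂ] X →ₗ[ℂ] X)
    (hL : ∀ (a b : A) (x : X), L (a * b) x = L a (L b x))
    (hR : ∀ (a b : A) (x : X), R (a * b) x = R b (R a x))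
    (hLR : ∀ (a b : A) (x : X), L a (R b x) = R b (L a x))
    (hLnorm : ∀ (a : A) (x : X), ‖L a x‖ ≤ ‖a‖ * ‖x‖)
    (hRnorm : ∀ (a : A) (x : X), ‖R a x‖ ≤ ‖x‖ * ‖a‖)
    (Y : Set X) (hYclosed : IsClosed Y) (hY0 : (0 : X) ∈ Y)
    (hYadd : ∀ x ∈ Y, ∀ y ∈ Y, x + y ∈ Y)
    (hYsmul : ∀ (c : ℂ), ∀ y ∈ Y, c • y ∈ Y)
    (hYL : ∀ (a : A), ∀ y ∈ Y, L a y ∈ Y)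
    (hYR : ∀ (a : A), ∀ y ∈ Y, R a y ∈ Y)
    (hKishY : ∀ y ∈ Y, KishimotoCondition L R y)
    (hKishModY : ∀ x : X, ∀ D : Set A, IsHereditarySubalgebra D → ∀ ε : ℝ, 0 < ε →
      ∃ a ∈ D, 0 ≤ a ∧ ‖a‖ = 1 ∧ ∃ y ∈ Y, ‖L a (R a x) - y‖ < ε) :
    ∀ x : X, KishimotoCondition L R x := by
  refine fun x ↦ kishimoto_extension_general ⟨hL, hR, hLR, hLnorm, hRnorm⟩ fun D hD ε hε ↦ ?_
  obtain ⟨a, haD, ha, ha_norm, y, hy, hay⟩ := hKishModY x D hD ε hε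
  exact ⟨a, haD, ha, ha_norm, y, hKishY y hy, hay⟩
end
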